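/- The set P(ℝ^d) of probability measures is closed in the dual space (C²_∞(ℝ^d))* equipped with its norm: if μ_n ∈ P(ℝ^d) and μ_n → ℓ in the norm of (C²_∞(ℝ^d))*, then ℓ is given by integration against a probability measure μ ∈ P(ℝ^d). -/

import Mathlib

open MeasureTheory

/-- A function of class `C²_∞(ℝ^d)`: twice continuously differentiable with all
derivatives up to order 2 vanishing at infinity. -/
def IsC2Vanishing {d : ℕ} (f : EuclideanSpace ℝ (Fin d) → ℝ) : Prop :=
  ContDiff ℝ 2 f ∧
  Filter.Tendsto f (Filter.cocompact (EuclideanSpace ℝ (Fin d))) (nhds 0) ∧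
  Filter.Tendsto (fun y => fderiv ℝ f y)
    (Filter.cocompact (EuclideanSpace ℝ (Fin d))) (nhds 0) ∧
  Filter.Tendsto (fun y => fderiv ℝ (fderiv ℝ f) y)
    (Filter.cocompact (EuclideanSpace ℝ (Fin d))) (nhds 0)

/-- `‖f‖_{C²} = Σ_{l≤2} ‖f^{(l)}‖_∞ ≤ 1`. -/
def C2NormLeOne {d : ℕ} (f : EuclideanSpace ℝ (Fin d) → ℝ) : Prop :=
  ∃ C0 C1 C2 : ℝ, (∀ y, |f y| ≤ C0) ∧ (∀ y, ‖fderiv ℝ f y‖ ≤ C1) ∧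
    (∀ y, ‖fderiv ℝ (fderiv ℝ f) y‖ ≤ C2) ∧ C0 + C1 + C2 ≤ 1

theorem aux_bdd {d : ℕ} {F : Type*} [NormedAddCommGroup F]
    (g : EuclideanSpace ℝ (Fin d) → F) (hg : Continuous g)
    (h0 : Filter.Tendsto g (Filter.cocompact (EuclideanSpace ℝ (Fin d))) (nhds 0)) :
    ∃ C : ℝ, 0 ≤ C ∧ ∀ x, ‖g x‖ ≤ C := by
  obtain ⟨C, hC⟩ := ZeroAtInftyContinuousMap.isBounded_range
    (⟨⟨g, hg⟩, h0⟩ : ZeroAtInftyContinuousMap (EuclideanSpace ℝ (Fin d)) F)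
    |>.exists_norm_le
  refine ⟨C, (norm_nonneg _).trans (hC (g 0) ⟨0, rfl⟩), fun x => hC (g x) ⟨x, rfl⟩⟩

theorem aux_C2_bdd {d : ℕ} (f : EuclideanSpace ℝ (Fin d) → ℝ) (hf : IsC2Vanishing f) :
    ∃ C0 C1 C2 : ℝ, (∀ y, |f y| ≤ C0) ∧ (∀ y, ‖fderiv ℝ f y‖ ≤ C1) ∧
    (∀ y, ‖fderiv ℝ (fderiv ℝ f) y‖ ≤ C2) ∧ 0 ≤ C0 ∧ 0 ≤ C1 ∧ 0 ≤ C2 := by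
  obtain ⟨hc, h0, h1, h2⟩ := hf
  have hd : ContDiff ℝ 1 (fderiv ℝ f) := hc.fderiv_right (by norm_num)
  obtain ⟨C0, p0, b0⟩ := aux_bdd f hc.continuous h0
  obtain ⟨C1, p1, b1⟩ := aux_bdd _ hd.continuous h1
  obtain ⟨C2, p2, b2⟩ := aux_bdd _ (hd.continuous_fderiv (by norm_num)) h2
  exact ⟨C0, C1, C2, b0, b1, b2, p0, p1, p2⟩

theorem aux_fd {E F : Type*} [NormedAddCommGroup E] [NormedSpace ℝ E] [NormedAddCommGroup F]
    [NormedSpace ℝ F] (g : E → F) (a : ℝ) : fderiv ℝ (a • g) = a • fderiv ℝ g :=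
  fderiv_const_smul_field a

theorem aux_fd_comp {E F : Type*} [NormedAddCommGroup E] [NormedSpace ℝ E]
    [NormedAddCommGroup F] [NormedSpace ℝ F] (g : E → F) (a : ℝ) :
    fderiv ℝ (fun x => g (a • x)) = a • fun x => fderiv ℝ g (a • x) := by
  funext x
  exact fderiv_comp_smul _

theorem aux_fd_norm {E F : Type*} [NormedAddCommGroup E] [NormedSpace ℝ E]
    [NormedAddCommGroup F] [NormedSpace ℝ F] (g : E → F) (a : ℝ) (ha : 0 ≤ a) (y : E) :
    ‖fderiv ℝ (a • g) y‖ = a * ‖fderiv ℝ g y‖ := by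
  rw [aux_fd, Pi.smul_apply, norm_smul, Real.norm_of_nonneg ha]

theorem aux_fd_comp_norm {E F : Type*} [NormedAddCommGroup E] [NormedSpace ℝ E]
    [NormedAddCommGroup F] [NormedSpace ℝ F] (g : E → F) (a : ℝ) (ha : 0 ≤ a) (y : E) :
    ‖fderiv ℝ (fun x => g (a • x)) y‖ = a * ‖fderiv ℝ g (a • y)‖ := by
  rw [aux_fd_comp, Pi.smul_apply, norm_smul, Real.norm_of_nonneg ha]

theorem aux_fd_tendsto {E F : Type*} [NormedAddCommGroup E] [NormedSpace ℝ E]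
    [NormedAddCommGroup F] [NormedSpace ℝ F] (g : E → F) (a : ℝ)
    (h : Filter.Tendsto (fun y => fderiv ℝ g y) (Filter.cocompact E) (nhds 0)) :
    Filter.Tendsto (fun y => fderiv ℝ (a • g) y) (Filter.cocompact E) (nhds 0) := by
  simp_rw [aux_fd]
  simpa using h.const_smul a

theorem aux_vanish_smul {d : ℕ} (f : EuclideanSpace ℝ (Fin d) → ℝ) (hf : IsC2Vanishing f)
    (a : ℝ) : IsC2Vanishing (a • f) := by
  obtain ⟨hc, h0, h1, h2⟩ := hf
  refine ⟨contDiff_const.smul hc, ?_, ?_, ?_⟩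
  · have := h0.const_smul a
    rw [smul_zero] at this
    exact this
  · exact aux_fd_tendsto f a h1
  · rw [aux_fd f a]
    exact aux_fd_tendsto (fderiv ℝ f) a h2

theorem aux_norm_smul {d : ℕ} (f : EuclideanSpace ℝ (Fin d) → ℝ) (C0 C1 C2 C : ℝ)
    (b0 : ∀ y, |f y| ≤ C0) (b1 : ∀ y, ‖fderiv ℝ f y‖ ≤ C1)
    (b2 : ∀ y, ‖fderiv ℝ (fderiv ℝ f) y‖ ≤ C2) (hC : 0 < C) (h : C0 + C1 + C2 ≤ C) :
    C2NormLeOne (C⁻¹ • f) := by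
  have hi : 0 < C⁻¹ := inv_pos.2 hC
  refine ⟨C⁻¹ * C0, C⁻¹ * C1, C⁻¹ * C2, fun y => ?_, fun y => ?_, fun y => ?_, ?_⟩
  · rw [Pi.smul_apply, smul_eq_mul, abs_mul, abs_of_pos hi]
    exact mul_le_mul_of_nonneg_left (b0 y) hi.le
  · rw [fderiv_const_smul_field, Pi.smul_apply, norm_smul, Real.norm_of_nonneg hi.le]
    exact mul_le_mul_of_nonneg_left (b1 y) hi.le
  · rw [aux_fd f]
    refine (aux_fd_norm (fderiv ℝ f) _ hi.le y).trans_le ?_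
    exact mul_le_mul_of_nonneg_left (b2 y) hi.le
  · rw [← mul_add, ← mul_add, inv_mul_le_iff₀ hC]
    linarith

theorem aux_compact {d : ℕ} (f : EuclideanSpace ℝ (Fin d) → ℝ) (hf : ContDiff ℝ 2 f)
    (hs : HasCompactSupport f) : IsC2Vanishing f :=
  ⟨hf, hs.is_zero_at_infty, (hs.fderiv ℝ).is_zero_at_infty,
    ((hs.fderiv ℝ).fderiv ℝ).is_zero_at_infty⟩

/-- Cut-off functions at scale `R` with uniformly bounded `C²` norm. -/
theorem aux_cutoff (d : ℕ) : ∃ C : ℝ, 0 < C ∧ ∀ R : ℝ, 1 ≤ R →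
    ∃ h : EuclideanSpace ℝ (Fin d) → ℝ, IsC2Vanishing h ∧ C2NormLeOne (C⁻¹ • h) ∧
      (∀ x, 0 ≤ h x) ∧ (∀ x, h x ≤ 1) ∧ (∀ x, ‖x‖ ≤ R → h x = 1) ∧
      (∀ x, 2 * R < ‖x‖ → h x = 0) := by
  let ψ : ContDiffBump (0 : EuclideanSpace ℝ (Fin d)) := ⟨1, 2, one_pos, one_lt_two⟩
  obtain ⟨C0, C1, C2, b0, b1, b2, p0, p1, p2⟩ :=
    aux_C2_bdd ψ (aux_compact ψ ψ.contDiff ψ.hasCompactSupport)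
  refine ⟨C0 + C1 + C2 + 1, by positivity, fun R hR => ?_⟩
  have hR0 : 0 < R := by linarith
  have hRi : 0 < R⁻¹ := inv_pos.2 hR0
  have hRi1 : R⁻¹ ≤ 1 := inv_le_one_of_one_le₀ hR
  have hz : ∀ x, 2 * R < ‖x‖ → ψ (R⁻¹ • x) = 0 := by
    intro x hx
    apply ψ.zero_of_le_dist
    rw [dist_zero_right, norm_smul, Real.norm_of_nonneg hRi.le, inv_mul_eq_div, le_div_iff₀ hR0]
    exact hx.le
  refine ⟨fun x => ψ (R⁻¹ • x), aux_compact _ (ψ.contDiff.comp (contDiff_const_smul _)) ?_,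
    aux_norm_smul _ C0 C1 C2 _ (fun y => b0 _) (fun y => ?_) (fun y => ?_) (by positivity)
    (by linarith), fun x => ψ.nonneg, fun x => ψ.le_one, fun x hx => ?_, hz⟩
  · refine HasCompactSupport.intro (isCompact_closedBall 0 (2 * R)) fun x hx => hz x ?_
    simpa using hx
  · rw [aux_fd_comp_norm _ _ hRi.le]
    exact (mul_le_of_le_one_left (norm_nonneg _) hRi1).trans (b1 _)
  · rw [aux_fd_comp]
    refine (aux_fd_norm (fun x => fderiv ℝ ψ (R⁻¹ • x)) _ hRi.le y).trans_le ?_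
    refine (mul_le_of_le_one_left (norm_nonneg _) hRi1).trans ?_
    refine (aux_fd_comp_norm (fderiv ℝ ψ) _ hRi.le y).trans_le ?_
    exact (mul_le_of_le_one_left (norm_nonneg _) hRi1).trans (b2 _)
  · apply ψ.one_of_mem_closedBall
    rw [mem_closedBall_zero_iff, norm_smul, Real.norm_of_nonneg hRi.le, inv_mul_eq_div,
      div_le_iff₀ hR0]
    simpa [ψ] using hx

theorem aux_conv {d : ℕ}
    (μn : ℕ → Measure (EuclideanSpace ℝ (Fin d)))
    (ℓ : (EuclideanSpace ℝ (Fin d) → ℝ) → ℝ)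
    (hsmul : ∀ (a : ℝ) f, IsC2Vanishing f → ℓ (a • f) = a * ℓ f) (n : ℕ) (ε : ℝ)
    (hn : ∀ f : EuclideanSpace ℝ (Fin d) → ℝ, IsC2Vanishing f → C2NormLeOne f →
        |(∫ y, f y ∂(μn n)) - ℓ f| ≤ ε)
    (f : EuclideanSpace ℝ (Fin d) → ℝ) (hf : IsC2Vanishing f) (C : ℝ) (hC : 0 < C)
    (h : C2NormLeOne (C⁻¹ • f)) : |(∫ y, f y ∂(μn n)) - ℓ f| ≤ C * ε := by
  have := hn _ (aux_vanish_smul f hf C⁻¹) h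
  rw [hsmul _ _ hf] at this
  simp only [Pi.smul_apply, smul_eq_mul, integral_const_mul] at this
  rwa [← mul_sub, abs_mul, abs_of_pos (inv_pos.2 hC), inv_mul_le_iff₀ hC] at this

theorem aux_tight {d : ℕ}
    (μn : ℕ → Measure (EuclideanSpace ℝ (Fin d)))
    [∀ n, IsProbabilityMeasure (μn n)]
    (ℓ : (EuclideanSpace ℝ (Fin d) → ℝ) → ℝ)
    (hsmul : ∀ (a : ℝ) f, IsC2Vanishing f → ℓ (a • f) = a * ℓ f)
    (hconv : ∀ ε > (0 : ℝ), ∃ N : ℕ, ∀ n ≥ N,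
      ∀ f : EuclideanSpace ℝ (Fin d) → ℝ, IsC2Vanishing f → C2NormLeOne f →
        |(∫ y, f y ∂(μn n)) - ℓ f| ≤ ε) : IsTightMeasureSet (Set.range μn) := by
  apply isTightMeasureSet_range_of_tendsto_limsup_measure_norm_gt
  obtain ⟨C, hC, hcut⟩ := aux_cutoff d
  suffices H : ∀ ε > (0 : ℝ), ∃ N : ℕ, ∃ R : ℝ, ∀ n ≥ N, (μn n).real {x | R < ‖x‖} ≤ ε by
    rw [ENNReal.tendsto_nhds_zero]
    intro ε hε
    obtain ⟨δ, hδ0, hδ⟩ := ENNReal.lt_iff_exists_nnreal_btwn.1 hε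
    obtain ⟨N, R, h⟩ := H δ (by simpa using hδ0)
    filter_upwards [Filter.eventually_ge_atTop R] with r hr
    refine Filter.limsup_le_of_le (h := ?_)
    filter_upwards [Filter.eventually_ge_atTop N] with n hn
    refine le_trans ?_ hδ.le
    refine (measure_mono (t := {x | R < ‖x‖}) fun x (hx : r < ‖x‖) => lt_of_le_of_lt hr hx).trans ?_
    have := h n hn
    rw [← ENNReal.ofReal_coe_nnreal]
    rw [← ofReal_measureReal]
    exact ENNReal.ofReal_le_ofReal this
  intro ε hε
  have hδ : 0 < ε / (2 * C + 1) := by positivity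
  have hδe : ε / (2 * C + 1) * (2 * C + 1) = ε := by field_simp
  set δ := ε / (2 * C + 1)
  obtain ⟨N, hN⟩ := hconv δ hδ
  obtain ⟨R, hR1, hR⟩ : ∃ R : ℝ, 1 ≤ R ∧ (μn N).real {x | R < ‖x‖} ≤ δ := by
    have h := tendsto_measure_norm_gt_of_isTightMeasureSet
      (isTightMeasureSet_singleton (μ := μn N))
    rw [ENNReal.tendsto_nhds_zero] at h
    obtain ⟨R, h1, h2⟩ := ((Filter.eventually_ge_atTop 1).and
      (h (ENNReal.ofReal δ) (by simpa using hδ))).exists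
    refine ⟨R, h1, ENNReal.toReal_le_of_le_ofReal hδ.le (by simpa using h2)⟩
  obtain ⟨h, hv, hn, hnn, hle, h1, h0⟩ := hcut R hR1
  have hint : ∀ n, Integrable h (μn n) := fun n =>
    Integrable.of_bound hv.1.continuous.aestronglyMeasurable 1
      (Filter.Eventually.of_forall fun x => by
        rw [Real.norm_of_nonneg (hnn x)]; exact hle x)
  have hm : ∀ r : ℝ, MeasurableSet {x : EuclideanSpace ℝ (Fin d) | r < ‖x‖} := fun r =>
    measurableSet_lt measurable_const measurable_norm
  have hint' : ∀ n, ∫ x, (1 - h x) ∂(μn n) = 1 - ∫ x, h x ∂(μn n) := fun n => by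
    rw [integral_sub (integrable_const _) (hint n)]; simp
  refine ⟨N, 2 * R, fun n hnN => ?_⟩
  have A : (μn n).real {x | 2 * R < ‖x‖} ≤ 1 - ∫ x, h x ∂(μn n) := by
    rw [← hint', ← integral_indicator_one (hm _)]
    refine integral_mono ((integrable_const 1).indicator (hm _))
      ((integrable_const _).sub (hint n)) fun x => ?_
    by_cases hx : 2 * R < ‖x‖
    · simp [Set.indicator, hx, h0 x hx]
    · simp [Set.indicator, hx, hle x]
  have B : 1 - ∫ x, h x ∂(μn N) ≤ (μn N).real {x | R < ‖x‖} := by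
    rw [← hint', ← integral_indicator_one (hm _)]
    refine integral_mono ((integrable_const _).sub (hint N))
      ((integrable_const 1).indicator (hm _)) fun x => ?_
    by_cases hx : R < ‖x‖
    · simp [Set.indicator, hx, hnn x]
    · simp [Set.indicator, hx, h1 x (not_lt.1 hx)]
  have P := abs_le.1 (aux_conv μn ℓ hsmul n δ (hN n hnN) h hv C hC hn)
  have Q := abs_le.1 (aux_conv μn ℓ hsmul N δ (hN N le_rfl) h hv C hC hn)
  nlinarith [P.1, Q.2]

/-- the set of probability measures on `ℝ^d` is closed in the
norm of the dual space `(C²_∞(ℝ^d))*`: if probability measures `μ_n` converge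
in this dual norm to a linear functional `ℓ`, then `ℓ` is given by integration
against some probability measure. -/
theorem prob_measures_closed_in_C2inf_dual {d : ℕ}
    (μn : ℕ → Measure (EuclideanSpace ℝ (Fin d)))
    [∀ n, IsProbabilityMeasure (μn n)]
    (ℓ : (EuclideanSpace ℝ (Fin d) → ℝ) → ℝ)
    (hadd : ∀ f g, IsC2Vanishing f → IsC2Vanishing g → ℓ (f + g) = ℓ f + ℓ g)
    (hsmul : ∀ (a : ℝ) f, IsC2Vanishing f → ℓ (a • f) = a * ℓ f)
    (hconv : ∀ ε > (0 : ℝ), ∃ N : ℕ, ∀ n ≥ N,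
      ∀ f : EuclideanSpace ℝ (Fin d) → ℝ, IsC2Vanishing f → C2NormLeOne f →
        |(∫ y, f y ∂(μn n)) - ℓ f| ≤ ε) :
    ∃ μ : Measure (EuclideanSpace ℝ (Fin d)), IsProbabilityMeasure μ ∧
      ∀ f : EuclideanSpace ℝ (Fin d) → ℝ, IsC2Vanishing f →
        ℓ f = ∫ y, f y ∂μ := by
  have ht := aux_tight μn ℓ hsmul hconv
  let p : ℕ → ProbabilityMeasure (EuclideanSpace ℝ (Fin d)) := fun n => ⟨μn n, inferInstance⟩
  have hcpt : IsCompact (closure (Set.range p)) := by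
    apply isCompact_closure_of_isTightMeasureSet
    refine ht.subset ?_
    rintro _ ⟨_, ⟨n, rfl⟩, rfl⟩
    exact ⟨n, rfl⟩
  obtain ⟨μ, -, hμ⟩ := hcpt.ultrafilter_le_nhds ((Filter.hyperfilter ℕ).map p) (by
    rw [Filter.le_principal_iff]
    exact Filter.mem_map.2 (Filter.Eventually.of_forall fun n : ℕ => subset_closure ⟨n, rfl⟩))
  have hμ' : Filter.Tendsto p (Filter.hyperfilter ℕ) (nhds μ) := hμ
  rw [ProbabilityMeasure.tendsto_iff_forall_integral_tendsto] at hμ'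
  refine ⟨μ, inferInstance, fun f hf => ?_⟩
  obtain ⟨C0, C1, C2, b0, b1, b2, p0, p1, p2⟩ := aux_C2_bdd f hf
  have hC : 0 < C0 + C1 + C2 + 1 := by positivity
  have hnorm := aux_norm_smul f C0 C1 C2 (C0 + C1 + C2 + 1) b0 b1 b2 hC (by linarith)
  have T1 := hμ' (BoundedContinuousFunction.ofNormedAddCommGroup f hf.1.continuous C0 b0)
  have T2 : Filter.Tendsto (fun n => ∫ y, f y ∂(μn n)) Filter.atTop (nhds (ℓ f)) := by
    rw [Metric.tendsto_atTop]
    intro ε hε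
    obtain ⟨N, hN⟩ := hconv (ε / 2 / (C0 + C1 + C2 + 1)) (by positivity)
    refine ⟨N, fun n hn => ?_⟩
    have := aux_conv μn ℓ hsmul n _ (hN n hn) f hf _ hC hnorm
    rw [mul_div_cancel₀ _ hC.ne'] at this
    rw [Real.dist_eq]
    linarith
  exact tendsto_nhds_unique (T2.mono_left Nat.hyperfilter_le_atTop) T1
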